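/- Let H: T × B̂ → R be a smooth compactly supported Hamiltonian with H(t,w) > −π(1−|w|²) for all (t,w), and let D(H) ⊂ C^n be the associated starshaped domain whose boundary over C*×C^{n−1} is the image under Φ of the graph of H. Then vol(D(H)) = π^n/n! + (1/(n−1)!)·Cal(φ_H^1), where Cal denotes the Calabi invariant of the time-one Hamiltonian diffeomorphism of the unit ball B̂ ⊂ C^{n−1}. -/

import Mathlib

/-!
STATEMENT 3: For a smooth compactly supported Hamiltonian `H : 𝕋 × B̂ → ℝ` with
`H(t,w) > −π(1−|w|²)`, the starshaped domain `D(H) ⊆ ℂⁿ` satisfies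
`vol(D(H)) = πⁿ/n! + (1/(n−1)!)·Cal(φ_H¹)`.

Here `n = m+1`, `𝕋 = ℝ/ℤ` is modelled by 1-periodic functions of `t ∈ ℝ`, `B̂` is the
open unit ball of `ℂ^{n−1} = ℂᵐ`, and the Calabi invariant of the time-one map of `H`
is `Cal(φ_H¹) = ∫_{𝕋×B̂} H dt ∧ ω̂₀^{n−1} = (n−1)! ∫_{(0,1]×B̂} H dLeb`.
-/

open scoped Real ENNReal
open Metric MeasureTheory

noncomputable section

abbrev Cn (n : ℕ) := EuclideanSpace ℂ (Fin n)

def Omega (m : ℕ) : Set (ℝ × ℝ × Cn m) := {p | π * (‖p.2.2‖ ^ 2 - 1) < p.1}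

/-- The symplectomorphism `Φ(s,t,w) = e^{2πit}·(√(1 + s/π − |w|²), w)`. -/
def Phi (m : ℕ) (p : ℝ × ℝ × Cn m) : Cn (m + 1) :=
  (WithLp.equiv 2 (Fin (m + 1) → ℂ)).symm fun i =>
    Complex.exp (2 * π * p.2.1 * Complex.I) *
      Fin.cons (α := fun _ : Fin (m + 1) => ℂ)
        ((Real.sqrt (1 + p.1 / π - ‖p.2.2‖ ^ 2) : ℝ) : ℂ) (fun j => p.2.2 j) i

/-- The starshaped domain `D(H)`: the region below the `Φ`-lift of the graph of `H`,
completed by the slice `{z₁ = 0, |z| < 1}`. -/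
def DH (m : ℕ) (H : ℝ × Cn m → ℝ) : Set (Cn (m + 1)) :=
  Phi m '' {p | p ∈ Omega m ∧ ‖p.2.2‖ < 1 ∧ p.1 < H (p.2.1, p.2.2)} ∪
    {z | z 0 = 0 ∧ ‖z‖ < 1}

/-- The Lebesgue volume of a subset of `ℂⁿ`. -/
def vol (n : ℕ) (A : Set (Cn n)) : ℝ≥0∞ :=
  volume ((WithLp.equiv 2 (Fin n → ℂ)) '' A)

/-- The Calabi invariant `Cal(φ_H¹) = ∫_{𝕋×B̂} H dt ∧ ω̂₀^{m} = m! ∫_{(0,1]×B̂} H dLeb`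
of the time-one map of the Hamiltonian `H`. -/
def calabi (m : ℕ) (H : ℝ × Cn m → ℝ) : ℝ :=
  (Nat.factorial m : ℝ) *
    ∫ q in (Set.Ioc (0 : ℝ) 1 ×ˢ
        {w : Fin m → ℂ | ‖(WithLp.equiv 2 (Fin m → ℂ)).symm w‖ < 1}),
      H (q.1, (WithLp.equiv 2 (Fin m → ℂ)).symm q.2)

/-
The map `z ↦ (z₁, e^{-i arg z₁}(z₂, …, z_n))` preserves volume, because unitary rotations do, and
takes `D(H)`, up to the null set `{z₁ = 0}`, to the set of `(u, w)` with `|w| < 1` and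
`π|u|² < π(1 - |w|²) + H(t, w)`, where `2πt = arg u`. As `(π|u|², t)` are area-preserving
coordinates on `ℂ`, the volume is the integral of `π(1 - |w|²) + H` over `𝕋 × B̂`. The first summand
contributes the volume `πⁿ/n!` of the unit ball, which is the case `H = 0`.
-/

section Polar
open scoped FourierTransform
open Set

/-- The angle of a complex number in turns: the representative of `arg u / 2π ∈ ℝ/ℤ` in
`(-1/2, 1/2]`, with value `0` at `u = 0`. -/
def turn (u : ℂ) : ℝ := u.arg / (2 * π)

lemma measurable_turn : Measurable turn := Complex.measurable_arg.div_const _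

lemma fourierChar_turn_smul_norm (u : ℂ) : 𝐞 (turn u) • (‖u‖ : ℂ) = u := by
  have harg : 2 * π * turn u = u.arg := mul_div_cancel₀ _ Real.two_pi_pos.ne'
  rw [Circle.smul_def, Real.fourierChar_apply, harg, smul_eq_mul, mul_comm,
    Complex.norm_mul_exp_arg_mul_I]

lemma fourierChar_turn_fourierChar_smul {r : ℝ} (hr : 0 < r) (t : ℝ) :
    𝐞 (turn (𝐞 t • (r : ℂ))) = 𝐞 t := by
  have h := fourierChar_turn_smul_norm (𝐞 t • (r : ℂ))
  rw [Circle.norm_smul, Complex.norm_of_nonneg hr.le] at h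
  exact Circle.ext (mul_right_cancel₀ (Complex.ofReal_ne_zero.2 hr.ne') h)

lemma exists_turn_fourierChar_smul {r : ℝ} (hr : 0 < r) (t : ℝ) :
    ∃ k : ℤ, turn (𝐞 t • (r : ℂ)) = t + k := by
  obtain ⟨k, hk⟩ := Circle.exp_eq_exp.1 (fourierChar_turn_fourierChar_smul hr t)
  refine ⟨k, mul_left_cancel₀ Real.two_pi_pos.ne' ?_⟩
  rw [hk]
  ring

lemma lintegral_Ioo_zero_ofReal {R : ℝ} (hR : 0 ≤ R) :
    ∫⁻ r in Ioo 0 R, ENNReal.ofReal r = ENNReal.ofReal (R ^ 2 / 2) := by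
  have hint : IntegrableOn (fun r : ℝ => r) (Ioo 0 R) :=
    (continuous_id.integrableOn_Icc (a := 0) (b := R)).mono_set Ioo_subset_Icc_self
  rw [← ofReal_integral_eq_lintegral_ofReal hint
      ((ae_restrict_mem measurableSet_Ioo).mono fun r hr => hr.1.le),
    ← integral_Ioc_eq_integral_Ioo, ← intervalIntegral.integral_of_le hR, integral_id]
  simp

lemma lintegral_ofReal_setOf_pi_mul_sq_lt (c : ℝ) :
    ∫⁻ r in Ioi 0 ∩ {r : ℝ | π * r ^ 2 < c}, ENNReal.ofReal r = ENNReal.ofReal (c / (2 * π)) := by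
  have hset : Ioi 0 ∩ {r : ℝ | π * r ^ 2 < c} = Ioo 0 (√(c / π)) := by
    ext r
    refine and_congr_right fun hr : 0 < r => ?_
    rw [mem_ofPred_eq, Real.lt_sqrt hr.le, lt_div_iff₀' Real.pi_pos]
  rw [hset, lintegral_Ioo_zero_ofReal (Real.sqrt_nonneg _)]
  rcases le_total 0 c with hc | hc
  · rw [Real.sq_sqrt (by positivity), div_div, mul_comm π]
  · rw [Real.sqrt_eq_zero_of_nonpos (div_nonpos_of_nonpos_of_nonneg hc Real.pi_pos.le),
      ENNReal.ofReal_of_nonpos (div_nonpos_of_nonpos_of_nonneg hc Real.two_pi_pos.le)]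
    simp

lemma turn_polarCoord_symm {p : ℝ × ℝ} (hp : p ∈ Complex.polarCoord.target) :
    turn (Complex.polarCoord.symm p) = p.2 / (2 * π) := by
  rw [turn, Complex.polarCoord_symm_apply, Complex.ofReal_cos, Complex.ofReal_sin,
    Complex.arg_mul_cos_add_sin_mul_I hp.1 ⟨hp.2.1, hp.2.2.le⟩]

lemma lintegral_Ioo_comp_div {c : ℝ} (hc : 0 < c) (a b : ℝ) (g : ℝ → ℝ≥0∞) :
    ∫⁻ x in Ioo a b, ENNReal.ofReal c⁻¹ * g (x / c) = ∫⁻ t in Ioo (a / c) (b / c), g t := by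
  have himage : (fun x => x / c) '' Ioo a b = Ioo (a / c) (b / c) := by
    simp_rw [div_eq_mul_inv]
    exact image_mul_right_Ioo _ _ (inv_pos.2 hc)
  rw [← himage, lintegral_image_eq_lintegral_abs_deriv_mul measurableSet_Ioo
    (fun x _ => ((hasDerivAt_id' x).div_const c).hasDerivWithinAt)
    (fun _ _ _ _ h => (div_left_inj' hc.ne').1 h)]
  simp only [one_div, abs_of_pos (inv_pos.2 hc)]

lemma volume_setOf_pi_mul_norm_sq_lt {f : ℝ → ℝ} (hf : Measurable f) :
    volume {u : ℂ | π * ‖u‖ ^ 2 < f (turn u)}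
      = ∫⁻ t in Ioo (-(1 / 2)) (1 / 2), ENNReal.ofReal (f t) := by
  have hA : MeasurableSet {u : ℂ | π * ‖u‖ ^ 2 < f (turn u)} :=
    measurableSet_lt (by fun_prop) (hf.comp measurable_turn)
  have hB : MeasurableSet {p : ℝ × ℝ | π * p.1 ^ 2 < f (p.2 / (2 * π))} :=
    measurableSet_lt (by fun_prop) (hf.comp (measurable_snd.div_const _))
  calc volume {u : ℂ | π * ‖u‖ ^ 2 < f (turn u)}
      = ∫⁻ p in Ioi (0 : ℝ) ×ˢ Ioo (-π) π,
          {p : ℝ × ℝ | π * p.1 ^ 2 < f (p.2 / (2 * π))}.indicator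
            (fun p => ENNReal.ofReal p.1) p := by
        rw [← lintegral_indicator_one hA, ← Complex.lintegral_comp_polarCoord_symm]
        refine setLIntegral_congr_fun (measurableSet_Ioi.prod measurableSet_Ioo) fun p hp => ?_
        simp only [indicator, mem_ofPred_eq, turn_polarCoord_symm hp, smul_eq_mul,
          Complex.norm_polarCoord_symm, abs_of_pos (show 0 < p.1 from hp.1), Pi.one_apply, mul_ite,
          mul_one, mul_zero]
    _ = ∫⁻ θ in Ioo (-π) π, ENNReal.ofReal (f (θ / (2 * π)) / (2 * π)) := by
        rw [Measure.volume_eq_prod, ← Measure.prod_restrict, lintegral_prod_symm]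
        · refine lintegral_congr fun θ => ?_
          rw [← lintegral_ofReal_setOf_pi_mul_sq_lt, inter_comm, ← setLIntegral_indicator
            (measurableSet_lt (by fun_prop) measurable_const)]
          rfl
        · exact (measurable_fst.ennreal_ofReal.indicator hB).aemeasurable
    _ = ∫⁻ t in Ioo (-(1 / 2)) (1 / 2), ENNReal.ofReal (f t) := by
        have hhalf : π / (2 * π) = 1 / 2 := by field_simp
        rw [← hhalf, ← neg_div, ← lintegral_Ioo_comp_div Real.two_pi_pos]
        refine lintegral_congr fun θ => ?_
        rw [← ENNReal.ofReal_mul (by positivity), div_eq_inv_mul]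

lemma setLIntegral_Ioc_eq_of_periodic {g : ℝ → ℝ≥0∞} {T : ℝ} (hg : Function.Periodic g T)
    (hT : 0 < T) (a b : ℝ) :
    ∫⁻ t in Ioc a (a + T), g t = ∫⁻ t in Ioc b (b + T), g t :=
  (isAddFundamentalDomain_Ioc hT a).setLIntegral_eq (isAddFundamentalDomain_Ioc hT b) g
    hg.map_vadd_zmultiples

/-- The set lying, over each `a`, below the graph of `f(·, a)` in the area coordinates
`(π|u|², turn u)` of `ℂ`. -/
def polarSubgraph {α : Type*} (f : ℝ × α → ℝ) : Set (ℂ × α) :=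
  {p | π * ‖p.1‖ ^ 2 < f (turn p.1, p.2)}

variable {α : Type*} [MeasurableSpace α] {f : ℝ × α → ℝ}

lemma measurableSet_polarSubgraph (hf : Measurable f) : MeasurableSet (polarSubgraph f) :=
  measurableSet_lt (by fun_prop)
    (hf.comp ((measurable_turn.comp measurable_fst).prodMk measurable_snd))

lemma volume_prod_polarSubgraph (μ : Measure α) [SFinite μ] (hf : Measurable f)
    (hper : ∀ t a, f (t + 1, a) = f (t, a)) :
    (volume.prod μ) (polarSubgraph f)
      = ∫⁻ p, ENNReal.ofReal (f p) ∂((volume.restrict (Ioc 0 1)).prod μ) := by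
  rw [Measure.prod_apply_symm (measurableSet_polarSubgraph hf),
    lintegral_prod_symm _ hf.ennreal_ofReal.aemeasurable]
  refine lintegral_congr fun a => ?_
  have hfa : Measurable fun t => f (t, a) := hf.comp measurable_prodMk_right
  have hperiodic : Function.Periodic (fun t => ENNReal.ofReal (f (t, a))) 1 :=
    fun t => congrArg ENNReal.ofReal (hper t a)
  calc volume ((fun u => (u, a)) ⁻¹' polarSubgraph f)
      = ∫⁻ t in Ioc (-(1 / 2)) (-(1 / 2) + 1), ENNReal.ofReal (f (t, a)) := by
        refine (volume_setOf_pi_mul_norm_sq_lt hfa).trans ?_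
        rw [restrict_Ioo_eq_restrict_Ioc]
        norm_num
    _ = ∫⁻ t in Ioc 0 1, ENNReal.ofReal (f (t, a)) := by
        rw [setLIntegral_Ioc_eq_of_periodic hperiodic one_pos _ 0, zero_add]

end Polar

section EuclideanVolume

/-- The projection `(z₁, …, z_{m+1}) ↦ (z₂, …, z_{m+1})`. -/
def tail {m : ℕ} (z : Cn (m + 1)) : Cn m := WithLp.toLp 2 (Fin.tail z.ofLp)

lemma norm_sq_eq_add_norm_sq_tail {m : ℕ} (z : Cn (m + 1)) :
    ‖z‖ ^ 2 = ‖z 0‖ ^ 2 + ‖tail z‖ ^ 2 := by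
  rw [EuclideanSpace.norm_sq_eq, EuclideanSpace.norm_sq_eq, Fin.sum_univ_succ]
  rfl

/-- The isometry `ℂ × ℂᵐ ≃ ℂ^{m+1}` for the `ℓ²` norm on the product. -/
def consIsometry (m : ℕ) : WithLp 2 (ℂ × Cn m) ≃ₗᵢ[ℝ] Cn (m + 1) where
  toFun p := WithLp.toLp 2 (Fin.cons p.fst p.snd.ofLp)
  invFun z := WithLp.toLp 2 (z 0, tail z)
  map_add' p q := by ext i; refine Fin.cases ?_ (fun j => ?_) i <;> simp
  map_smul' c p := by ext i; refine Fin.cases ?_ (fun j => ?_) i <;> simp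
  left_inv _ := rfl
  right_inv z := by ext i; refine Fin.cases ?_ (fun j => ?_) i <;> rfl
  norm_map' p := by
    rw [← sq_eq_sq₀ (norm_nonneg _) (norm_nonneg _), norm_sq_eq_add_norm_sq_tail,
      WithLp.prod_norm_sq_eq_of_L2]
    rfl

lemma measurePreserving_head_tail (m : ℕ) :
    MeasurePreserving fun z : Cn (m + 1) => (z 0, tail z) :=
  (WithLp.volume_preserving_ofLp ℂ (Cn m)).comp (consIsometry m).symm.measurePreserving

lemma volume_eq_dirac_of_subsingleton {E : Type*} [NormedAddCommGroup E] [InnerProductSpace ℝ E]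
    [FiniteDimensional ℝ E] [MeasurableSpace E] [BorelSpace E] [Subsingleton E] :
    (volume : Measure E) = Measure.dirac 0 := by
  have : IsEmpty (Fin (Module.finrank ℝ E)) := by
    rw [Module.finrank_zero_of_subsingleton]
    infer_instance
  have hpres := (stdOrthonormalBasis ℝ E).measurePreserving_repr_symm
  rw [← hpres.map_eq, volume_euclideanSpace_eq_dirac, Measure.map_dirac' hpres.measurable, map_zero]

lemma measurePreserving_ofLp (m : ℕ) :
    MeasurePreserving (WithLp.ofLp : Cn m → Fin m → ℂ) := by
  induction m with
  | zero =>
    refine ⟨WithLp.measurable_ofLp _ _, ?_⟩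
    rw [volume_eq_dirac_of_subsingleton, Measure.volume_pi_eq_dirac 0,
      Measure.map_dirac' (WithLp.measurable_ofLp _ _), WithLp.ofLp_zero]
  | succ m ih =>
    have hcomp : (WithLp.ofLp : Cn (m + 1) → Fin (m + 1) → ℂ)
        = (MeasurableEquiv.piFinSuccAbove (fun _ => ℂ) 0).symm ∘ Prod.map id WithLp.ofLp ∘
          fun z => (z 0, tail z) := by
      funext z i
      refine Fin.cases ?_ (fun j => ?_) i <;> simp [tail, Fin.tail, MeasurableEquiv.piFinSuccAbove]
    rw [hcomp]
    exact (volume_preserving_piFinSuccAbove (fun _ => ℂ) 0).symm.comp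
      (((MeasurePreserving.id volume).prod ih).comp (measurePreserving_head_tail m))

lemma measurePreserving_toLp (m : ℕ) :
    MeasurePreserving (MeasurableEquiv.toLp 2 (Fin m → ℂ)) :=
  (measurePreserving_ofLp m).symm (MeasurableEquiv.toLp 2 (Fin m → ℂ)).symm

lemma vol_eq_volume {n : ℕ} (A : Set (Cn n)) : vol n A = volume A := by
  rw [vol, Equiv.image_eq_preimage_symm]
  exact (measurePreserving_toLp n).measure_preimage_equiv A

lemma volume_unitBall (m : ℕ) : volume (ball (0 : Cn (m + 1)) 1)
    = ENNReal.ofReal (π ^ (m + 1) / (m + 1).factorial) := by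
  have hdim : Module.finrank ℝ (Cn (m + 1)) = 2 * (m + 1) := by
    rw [← Module.finrank_mul_finrank ℝ ℂ, Complex.finrank_real_complex, finrank_euclideanSpace_fin]
  simp [InnerProductSpace.volume_ball_of_dim_even hdim]

lemma measurePreserving_circle_smul {m : ℕ} (c : Circle) :
    MeasurePreserving fun w : Cn m => c • w :=
  (⟨DistribMulAction.toLinearEquiv ℝ _ c, Circle.norm_smul c⟩ : Cn m ≃ₗᵢ[ℝ] Cn m).measurePreserving

end EuclideanVolume

section Chart
open scoped FourierTransform
open Set

variable {m : ℕ}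

/-- The coordinates `(z₁, e^{-i arg z₁}(z₂, …, z_{m+1}))`, in which the factor `e^{2πit}` that `Φ`
puts on `w` is undone. -/
def untwist (z : Cn (m + 1)) : ℂ × Cn m := (z 0, (𝐞 (turn (z 0)))⁻¹ • tail z)

lemma measurePreserving_untwist (m : ℕ) :
    MeasurePreserving (untwist : Cn (m + 1) → ℂ × Cn m) := by
  have hmeas : Measurable fun p : ℂ × Cn m => (𝐞 (turn p.1))⁻¹ • p.2 := by
    have hcoe : Measurable fun p : ℂ × Cn m => (((𝐞 (turn p.1))⁻¹ : Circle) : ℂ) := by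
      simp only [Circle.coe_inv, Real.fourierChar_apply]
      exact ((Complex.measurable_ofReal.comp (measurable_const.mul
        (measurable_turn.comp measurable_fst))).mul_const _).cexp.inv
    exact hcoe.smul measurable_snd
  exact ((MeasurePreserving.id volume).skew_product (g := fun u w => (𝐞 (turn u))⁻¹ • w) hmeas
    (ae_of_all _ fun _ => (measurePreserving_circle_smul _).map_eq)).comp
    (measurePreserving_head_tail m)

lemma norm_sq_eq_add_norm_sq_untwist (z : Cn (m + 1)) :
    ‖z‖ ^ 2 = ‖(untwist z).1‖ ^ 2 + ‖(untwist z).2‖ ^ 2 := by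
  rw [norm_sq_eq_add_norm_sq_tail, untwist, Circle.norm_smul]

lemma norm_untwist_snd_le (z : Cn (m + 1)) : ‖(untwist z).2‖ ≤ ‖z‖ := by
  rw [← sq_le_sq₀ (norm_nonneg _) (norm_nonneg _), norm_sq_eq_add_norm_sq_untwist z]
  exact le_add_of_nonneg_left (sq_nonneg _)

lemma Phi_apply_zero (p : ℝ × ℝ × Cn m) :
    Phi m p 0 = 𝐞 p.2.1 • ((√(1 + p.1 / π - ‖p.2.2‖ ^ 2) : ℝ) : ℂ) := by
  simp [Phi, Circle.smul_def, Real.fourierChar_apply]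

lemma tail_Phi (p : ℝ × ℝ × Cn m) : tail (Phi m p) = 𝐞 p.2.1 • p.2.2 := by
  ext j
  simp [tail, Fin.tail, Phi, Circle.smul_def, Real.fourierChar_apply]

/-- The inverse of `Φ` on `{z₁ ≠ 0}`, with `t` chosen in `(-1/2, 1/2]`. -/
def PhiInv (z : Cn (m + 1)) : ℝ × ℝ × Cn m :=
  (π * (‖z‖ ^ 2 - 1), turn (z 0), (untwist z).2)

lemma Phi_PhiInv (z : Cn (m + 1)) : Phi m (PhiInv z) = z := by
  have hradicand : 1 + (PhiInv z).1 / π - ‖(PhiInv z).2.2‖ ^ 2 = ‖z 0‖ ^ 2 := by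
    simp only [PhiInv, mul_div_cancel_left₀ _ Real.pi_ne_zero, norm_sq_eq_add_norm_sq_untwist z]
    simp only [untwist]
    ring
  apply (consIsometry m).symm.injective
  change WithLp.toLp 2 (_, _) = WithLp.toLp 2 (_, _)
  rw [Phi_apply_zero, tail_Phi, hradicand, Real.sqrt_sq (norm_nonneg _)]
  simp only [PhiInv, untwist, fourierChar_turn_smul_norm, smul_inv_smul]

lemma PhiInv_mem_Omega {z : Cn (m + 1)} (hz : z 0 ≠ 0) : PhiInv z ∈ Omega m := by
  have hlt : ‖(untwist z).2‖ ^ 2 < ‖z‖ ^ 2 := by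
    rw [norm_sq_eq_add_norm_sq_untwist]
    exact lt_add_of_pos_left _ (pow_pos (norm_pos_iff.2 hz) 2)
  exact mul_lt_mul_of_pos_left (sub_lt_sub_right hlt 1) Real.pi_pos

lemma radicand_pos_of_mem_Omega {p : ℝ × ℝ × Cn m} (hp : p ∈ Omega m) :
    0 < 1 + p.1 / π - ‖p.2.2‖ ^ 2 := by
  have h : ‖p.2.2‖ ^ 2 - 1 < p.1 / π := (lt_div_iff₀' Real.pi_pos).2 hp
  linarith

lemma exists_PhiInv_Phi {p : ℝ × ℝ × Cn m} (hp : p ∈ Omega m) :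
    ∃ k : ℤ, PhiInv (Phi m p) = (p.1, p.2.1 + k, p.2.2) := by
  have hpos := radicand_pos_of_mem_Omega hp
  have hnorm : π * (‖Phi m p‖ ^ 2 - 1) = p.1 := by
    rw [norm_sq_eq_add_norm_sq_tail, Phi_apply_zero, tail_Phi, Circle.norm_smul, Circle.norm_smul,
      Complex.norm_of_nonneg (Real.sqrt_nonneg _), Real.sq_sqrt hpos.le]
    field_simp
    ring
  have huntwist : (untwist (Phi m p)).2 = p.2.2 := by
    rw [untwist, tail_Phi, Phi_apply_zero,
      fourierChar_turn_fourierChar_smul (Real.sqrt_pos.2 hpos), inv_smul_smul]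
  obtain ⟨k, hk⟩ := exists_turn_fourierChar_smul (Real.sqrt_pos.2 hpos) p.2.1
  refine ⟨k, ?_⟩
  rw [PhiInv, hnorm, huntwist, Phi_apply_zero, hk]

variable {H : ℝ × Cn m → ℝ}

lemma mem_DH_iff_PhiInv (hper : ∀ t w, H (t + 1, w) = H (t, w)) {z : Cn (m + 1)}
    (hz : z 0 ≠ 0) :
    z ∈ DH m H ↔ ‖(PhiInv z).2.2‖ < 1 ∧ (PhiInv z).1 < H (PhiInv z).2 := by
  constructor
  · rintro (⟨p, ⟨hp, hball, hlt⟩, rfl⟩ | ⟨hz', -⟩)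
    · obtain ⟨k, hk⟩ := exists_PhiInv_Phi hp
      have hperiodic : Function.Periodic (fun t => H (t, p.2.2)) 1 := fun t => hper t p.2.2
      have hshift : H (p.2.1 + k, p.2.2) = H (p.2.1, p.2.2) := by
        simpa using hperiodic.int_mul k p.2.1
      rw [hk, hshift]
      exact ⟨hball, hlt⟩
    · exact absurd hz' hz
  · rintro ⟨hball, hlt⟩
    exact Or.inl ⟨PhiInv z, ⟨PhiInv_mem_Omega hz, hball, hlt⟩, Phi_PhiInv z⟩

/-- When nonnegative, `π|z₁|²` at the boundary point of `D(H)` with coordinates `q = (t, w)`. -/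
def fiberArea (H : ℝ × Cn m → ℝ) (q : ℝ × Cn m) : ℝ := π * (1 - ‖q.2‖ ^ 2) + H q

lemma PhiInv_lt_iff_mem_polarSubgraph {z : Cn (m + 1)} :
    (PhiInv z).1 < H (PhiInv z).2 ↔ untwist z ∈ polarSubgraph (fiberArea H) := by
  change π * (‖z‖ ^ 2 - 1) < H (PhiInv z).2 ↔
    π * ‖(untwist z).1‖ ^ 2 < π * (1 - ‖(untwist z).2‖ ^ 2) + H (PhiInv z).2
  rw [norm_sq_eq_add_norm_sq_untwist, ← sub_lt_iff_lt_add', ← mul_sub, sub_sub_eq_add_sub]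

lemma mem_DH_iff_untwist (hper : ∀ t w, H (t + 1, w) = H (t, w)) {z : Cn (m + 1)}
    (hz : z 0 ≠ 0) :
    z ∈ DH m H ↔ untwist z ∈ polarSubgraph (fiberArea H) ∩ univ ×ˢ ball 0 1 := by
  rw [mem_DH_iff_PhiInv hper hz, PhiInv_lt_iff_mem_polarSubgraph, and_comm, mem_inter_iff,
    mem_prod, mem_ball_zero_iff]
  exact and_congr_right fun _ => (and_iff_right trivial).symm

lemma ae_apply_zero_ne_zero (m : ℕ) : ∀ᵐ z : Cn (m + 1), z 0 ≠ 0 := by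
  have h : ∀ᵐ p : ℂ × Cn m, p.1 ≠ 0 :=
    Measure.quasiMeasurePreserving_fst.ae (Measure.ae_ne volume 0)
  exact (measurePreserving_head_tail m).quasiMeasurePreserving.ae h

end Chart

section Volume
open Set

variable {m : ℕ} {H : ℝ × Cn m → ℝ}

lemma measurable_fiberArea (hH : Measurable H) : Measurable (fiberArea H) :=
  (by fun_prop : Measurable fun q : ℝ × Cn m => π * (1 - ‖q.2‖ ^ 2)).add hH

lemma volume_DH (hH : Measurable H) (hper : ∀ t w, H (t + 1, w) = H (t, w)) :
    volume (DH m H) = ∫⁻ q in Ioc 0 1 ×ˢ ball 0 1, ENNReal.ofReal (fiberArea H q) := by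
  have hae : DH m H =ᵐ[volume]
      untwist ⁻¹' (polarSubgraph (fiberArea H) ∩ univ ×ˢ ball 0 1) := by
    filter_upwards [ae_apply_zero_ne_zero m] with z hz
    exact propext (mem_DH_iff_untwist hper hz)
  have hball : MeasurableSet (univ ×ˢ ball 0 1 : Set (ℂ × Cn m)) :=
    MeasurableSet.univ.prod measurableSet_ball
  have hmeas := measurable_fiberArea hH
  have hfperiodic : ∀ t w, fiberArea H (t + 1, w) = fiberArea H (t, w) := fun t w =>
    congrArg (π * (1 - ‖w‖ ^ 2) + ·) (hper t w)
  rw [measure_congr hae, (measurePreserving_untwist m).measure_preimage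
      ((measurableSet_polarSubgraph hmeas).inter hball).nullMeasurableSet,
    ← Measure.restrict_apply (measurableSet_polarSubgraph hmeas), Measure.volume_eq_prod,
    ← Measure.prod_restrict, Measure.restrict_univ, volume_prod_polarSubgraph _ hmeas hfperiodic,
    Measure.prod_restrict, Measure.volume_eq_prod]

lemma toReal_volume_DH (hH : Measurable H) (hper : ∀ t w, H (t + 1, w) = H (t, w))
    (hbound : ∀ t w, ‖w‖ < 1 → -(π * (1 - ‖w‖ ^ 2)) ≤ H (t, w)) :
    (volume (DH m H)).toReal = ∫ q in Ioc 0 1 ×ˢ ball 0 1, fiberArea H q := by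
  have hnonneg : 0 ≤ᵐ[volume.restrict (Ioc 0 1 ×ˢ ball 0 1)] fiberArea H := by
    filter_upwards [ae_restrict_mem (measurableSet_Ioc.prod measurableSet_ball)] with q hq
    exact neg_le_iff_add_nonneg'.1 (hbound q.1 q.2 (mem_ball_zero_iff.1 hq.2))
  rw [volume_DH hH hper, integral_eq_lintegral_of_nonneg_ae hnonneg
    (measurable_fiberArea hH).aestronglyMeasurable]

lemma DH_zero_ae_eq_ball (m : ℕ) : DH m (fun _ => 0) =ᵐ[volume] ball 0 1 := by
  filter_upwards [ae_apply_zero_ne_zero m] with z hz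
  refine propext (show z ∈ DH m (fun _ => 0) ↔ z ∈ ball 0 1 from ?_)
  rw [mem_DH_iff_PhiInv (fun _ _ => rfl) hz, mem_ball_zero_iff, PhiInv, ← smul_eq_mul,
    smul_neg_iff_of_pos_left Real.pi_pos, sub_neg, sq_lt_one_iff₀ (norm_nonneg z)]
  exact and_iff_right_of_imp (norm_untwist_snd_le z).trans_lt

lemma setIntegral_pi_mul_one_sub_norm_sq (m : ℕ) :
    ∫ q in Ioc (0 : ℝ) 1 ×ˢ ball (0 : Cn m) 1, π * (1 - ‖q.2‖ ^ 2)
      = π ^ (m + 1) / (m + 1).factorial := by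
  have hbound : ∀ (_ : ℝ) (w : Cn m), ‖w‖ < 1 → -(π * (1 - ‖w‖ ^ 2)) ≤ 0 := fun _ w hw =>
    neg_nonpos.2 (mul_nonneg Real.pi_pos.le (sub_nonneg.2 (pow_le_one₀ (norm_nonneg w) hw.le)))
  have hzero := toReal_volume_DH measurable_const (fun _ _ => rfl) hbound
  rw [measure_congr (DH_zero_ae_eq_ball m), volume_unitBall,
    ENNReal.toReal_ofReal (by positivity)] at hzero
  simpa only [fiberArea, add_zero] using hzero.symm

lemma integrableOn_Ioc_prod_ball {f : ℝ × Cn m → ℝ} (hf : Continuous f) :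
    IntegrableOn f (Ioc 0 1 ×ˢ ball 0 1) :=
  (hf.continuousOn.integrableOn_compact (isCompact_Icc.prod (isCompact_closedBall 0 1))).mono_set
    (prod_mono Ioc_subset_Icc_self ball_subset_closedBall)

lemma calabi_eq_setIntegral (H : ℝ × Cn m → ℝ) :
    calabi m H = m.factorial * ∫ q in Ioc 0 1 ×ˢ ball 0 1, H q := by
  have hprod : MeasurePreserving
      ((MeasurableEquiv.refl ℝ).prodCongr (MeasurableEquiv.toLp 2 (Fin m → ℂ))) :=
    (MeasurePreserving.id volume).prod (measurePreserving_toLp m)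
  rw [calabi, ← hprod.setIntegral_preimage_emb (MeasurableEquiv.measurableEmbedding _)]
  congr! 3
  ext q
  simp [MeasurableEquiv.prodCongr]

theorem vol_DH_general (hH : Measurable H) (hper : ∀ t w, H (t + 1, w) = H (t, w))
    (hint : IntegrableOn H (Ioc 0 1 ×ˢ ball 0 1))
    (hbound : ∀ t w, ‖w‖ < 1 → -(π * (1 - ‖w‖ ^ 2)) ≤ H (t, w)) :
    (vol (m + 1) (DH m H)).toReal =
      π ^ (m + 1) / (m + 1).factorial + 1 / m.factorial * calabi m H := by
  have hfact : (m.factorial : ℝ) ≠ 0 := Nat.cast_ne_zero.2 m.factorial_ne_zero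
  calc (vol (m + 1) (DH m H)).toReal
      = ∫ q in Ioc 0 1 ×ˢ ball 0 1, fiberArea H q := by
        rw [vol_eq_volume, toReal_volume_DH hH hper hbound]
    _ = (∫ q in Ioc (0 : ℝ) 1 ×ˢ ball (0 : Cn m) 1, π * (1 - ‖q.2‖ ^ 2))
          + ∫ q in Ioc 0 1 ×ˢ ball 0 1, H q :=
        integral_add (integrableOn_Ioc_prod_ball (by fun_prop)) hint
    _ = π ^ (m + 1) / (m + 1).factorial + 1 / m.factorial * calabi m H := by
        rw [setIntegral_pi_mul_one_sub_norm_sq, calabi_eq_setIntegral, one_div,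
          inv_mul_cancel_left₀ hfact]

end Volume

/-- `vol(D(H)) = πⁿ/n! + Cal(φ_H¹)/(n−1)! = vol(B) + Cal(φ_H¹)/(n−1)!`. -/
theorem vol_DH (m : ℕ) (H : ℝ × Cn m → ℝ)
    (hsmooth : ContDiff ℝ (⊤ : ℕ∞) H)
    (hper : ∀ (t : ℝ) (w : Cn m), H (t + 1, w) = H (t, w))
    (hsupp : ∃ ρ : ℝ, ρ < 1 ∧ ∀ (t : ℝ) (w : Cn m), ρ ≤ ‖w‖ → H (t, w) = 0)
    (hbound : ∀ (t : ℝ) (w : Cn m), ‖w‖ < 1 → -(π * (1 - ‖w‖ ^ 2)) < H (t, w)) :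
    (vol (m + 1) (DH m H)).toReal =
      π ^ (m + 1) / (Nat.factorial (m + 1) : ℝ)
        + (1 / (Nat.factorial m : ℝ)) * calabi m H :=
  vol_DH_general hsmooth.continuous.measurable hper (integrableOn_Ioc_prod_ball hsmooth.continuous)
    fun t w hw => (hbound t w hw).le

end
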